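/- arXiv:math/0405450 — 6 statements merged into one kernel-verified Lean document; each statement's English description precedes it below -/
import Mathlib

section
/- The group G̃ is isomorphic to the direct product S₄ × C₂ of the symmetric group on four letters with a cyclic group of order 2. -/
open Matrix

abbrev F2 := ZMod 2

/-- Conjugation by `C ∈ GL₂(R)` as an automorphism of the additive group of `2×2`
matrices over `R` (written multiplicatively). -/
def conjAut {R : Type} [CommRing R] (C : GL (Fin 2) R) :
    MulAut (Multiplicative (Matrix (Fin 2) (Fin 2) R)) where
  toFun A := Multiplicative.ofAdd
    ((C : Matrix (Fin 2) (Fin 2) R) * (Multiplicative.toAdd A) *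
      ((C⁻¹ : GL (Fin 2) R) : Matrix (Fin 2) (Fin 2) R))
  invFun A := Multiplicative.ofAdd
    (((C⁻¹ : GL (Fin 2) R) : Matrix (Fin 2) (Fin 2) R) * (Multiplicative.toAdd A) *
      (C : Matrix (Fin 2) (Fin 2) R))
  left_inv A := by simp [mul_assoc]
  right_inv A := by simp [mul_assoc]
  map_mul' A B := by
    simp [mul_add, add_mul, ← ofAdd_add]

/-- Conjugation as an action of `GL₂(R)` by automorphisms on the additive group of
`2×2` matrices, i.e. the defining homomorphism of `M₂(R) ⋊ GL₂(R)`. -/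
def conjHom (R : Type) [CommRing R] :
    GL (Fin 2) R →* MulAut (Multiplicative (Matrix (Fin 2) (Fin 2) R)) where
  toFun := conjAut
  map_one' := by ext A; simp [conjAut]
  map_mul' C D := by ext A; simp [conjAut, mul_assoc]

/-- `M₂(R) ⋊ GL₂(R)`, the semidirect product of the additive group of `2×2` matrices
by `GL₂(R)` acting by conjugation; the group law is `(A,C)·(B,D) = (A + C B C⁻¹, C D)`. -/
abbrev MGL (R : Type) [CommRing R] :=
  SemidirectProduct (Multiplicative (Matrix (Fin 2) (Fin 2) R)) (GL (Fin 2) R) (conjHom R)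

lemma trace_conj_GL {R : Type} [CommRing R] (C : GL (Fin 2) R)
    (M : Matrix (Fin 2) (Fin 2) R) :
    ((C : Matrix (Fin 2) (Fin 2) R) * M *
      ((C⁻¹ : GL (Fin 2) R) : Matrix (Fin 2) (Fin 2) R)).trace = M.trace := by
  rw [Matrix.trace_mul_cycle]
  simp [mul_assoc]

/-- `G̃`: the subgroup of `M₂(𝔽₂) ⋊ GL₂(𝔽₂)` of pairs `(A, C)` with `tr A = 0`. -/
def Gtilde : Subgroup (MGL F2) where
  carrier := {x | Matrix.trace (Multiplicative.toAdd x.left) = 0}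
  one_mem' := by simp
  mul_mem' {x y} hx hy := by
    have hx' : Matrix.trace (Multiplicative.toAdd x.left) = 0 := hx
    have hy' : Matrix.trace (Multiplicative.toAdd y.left) = 0 := hy
    show Matrix.trace (Multiplicative.toAdd (x * y).left) = 0
    rw [SemidirectProduct.mul_left]
    show Matrix.trace (Multiplicative.toAdd x.left +
      ((x.right : Matrix (Fin 2) (Fin 2) F2) * (Multiplicative.toAdd y.left) *
        ((x.right⁻¹ : GL (Fin 2) F2) : Matrix (Fin 2) (Fin 2) F2))) = 0
    rw [Matrix.trace_add, trace_conj_GL, hx', hy', add_zero]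
  inv_mem' {x} hx := by
    have hx' : Matrix.trace (Multiplicative.toAdd x.left) = 0 := hx
    show Matrix.trace (Multiplicative.toAdd x⁻¹.left) = 0
    rw [SemidirectProduct.inv_left]
    show Matrix.trace
      (((x.right⁻¹ : GL (Fin 2) F2) : Matrix (Fin 2) (Fin 2) F2) *
        (Multiplicative.toAdd x.left⁻¹) *
        ((x.right⁻¹⁻¹ : GL (Fin 2) F2) : Matrix (Fin 2) (Fin 2) F2)) = 0
    rw [trace_conj_GL]
    simp [hx']

/-!
In characteristic `2`, conjugation of a traceless `2 × 2` matrix by `C` acts on its off-diagonal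
vector by the Frobenius twist of `C`, up to the factor `det C`. Over `𝔽₂` both the twist and the
determinant are trivial, so `𝔰𝔩₂(𝔽₂)` surjects equivariantly onto the standard module `𝔽₂²`,
with kernel the scalar matrices. The surjection splits: a traceless matrix has the
conjugation-invariant value `det A + [A not scalar]`, which over `𝔽₂` is *linear* in `A`. Hence
`G̃ ≅ (𝔽₂² ⋊ GL₂(𝔽₂)) × 𝔽₂`, and the `24` affine transformations of the four-point plane `𝔽₂²`
are all of its permutations.
-/

lemma eq_and_eq_of_forall_mulVec_add_eq {m n R : Type*} [Fintype n] [NonAssocSemiring R]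
    [IsRightCancelAdd R] {M N : Matrix m n R} {a b : m → R}
    (h : ∀ v, M *ᵥ v + a = N *ᵥ v + b) : M = N ∧ a = b := by
  classical
  have hab : a = b := by simpa using h 0
  refine ⟨Matrix.ext_of_mulVec_single fun i ↦ ?_, hab⟩
  simpa [hab] using h (Pi.single i 1)

lemma GL_det_eq_one {n R : Type*} [Fintype n] [DecidableEq n] [CommRing R] [Subsingleton Rˣ]
    (C : GL n R) : C.1.det = 1 :=
  congrArg Units.val (Subsingleton.elim (Matrix.GeneralLinearGroup.det C) 1)

section Traceless

variable {R : Type*} [CommRing R]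

/-- The linear map sending a `2 × 2` matrix to its off-diagonal entries `(A₀₁, A₁₀)`; it exhibits
the traceless matrices modulo scalars over `𝔽₂` as the standard module. -/
def offDiag : Matrix (Fin 2) (Fin 2) R →ₗ[R] (Fin 2 → R) where
  toFun A := ![A 0 1, A 1 0]
  map_add' _ _ := by simp
  map_smul' _ _ := by simp

/-- The linear form `A₀₀ + A₀₁ + A₁₀`, which over `𝔽₂` is invariant under conjugation on traceless
matrices and splits off the scalar ones. -/
def invariantForm : Matrix (Fin 2) (Fin 2) R →ₗ[R] R where
  toFun A := A 0 0 + A 0 1 + A 1 0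
  map_add' _ _ := by simp only [Matrix.add_apply]; ring
  map_smul' _ _ := by simp only [Matrix.smul_apply, smul_eq_mul, RingHom.id_apply]; ring

@[simp]
lemma offDiag_apply (A : Matrix (Fin 2) (Fin 2) R) : offDiag A = ![A 0 1, A 1 0] := rfl

@[simp]
lemma invariantForm_apply (A : Matrix (Fin 2) (Fin 2) R) :
    invariantForm A = A 0 0 + A 0 1 + A 1 0 := rfl

lemma apply_one_one_eq_neg_of_trace_eq_zero {A : Matrix (Fin 2) (Fin 2) R} (hA : A.trace = 0) :
    A 1 1 = -A 0 0 := by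
  rw [Matrix.trace_fin_two] at hA
  exact (neg_eq_of_add_eq_zero_right hA).symm

lemma offDiag_mul_mul_adjugate [CharP R 2] (M : Matrix (Fin 2) (Fin 2) R)
    {A : Matrix (Fin 2) (Fin 2) R} (hA : A.trace = 0) :
    offDiag (M * A * M.adjugate) = M.map (· ^ 2) *ᵥ offDiag A := by
  have hA' := apply_one_one_eq_neg_of_trace_eq_zero hA
  have h2 : (2 : R) = 0 := CharTwo.two_eq_zero
  simp only [offDiag_apply, Matrix.mulVec_fin_two, Matrix.adjugate_fin_two, Matrix.mul_apply,
    Fin.sum_univ_two, Matrix.map_apply, Matrix.of_apply, Matrix.cons_val', Matrix.cons_val_zero,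
    Matrix.cons_val_one, Matrix.cons_val_fin_one, hA', funext_iff, Fin.forall_fin_two]
  constructor
  · linear_combination (-M 0 0 * M 0 1 * A 0 0 - M 0 1 ^ 2 * A 1 0) * h2
  · linear_combination (M 1 0 * M 1 1 * A 0 0 - M 1 0 ^ 2 * A 0 1) * h2

/-- The linear coordinates `(offDiag, invariantForm)` on the traceless `2 × 2` matrices. -/
def tracelessEquiv :
    LinearMap.ker (Matrix.traceLinearMap (Fin 2) R R) ≃ₗ[R] (Fin 2 → R) × R where
  toLinearMap := (offDiag.prod invariantForm).domRestrict _
  invFun p := ⟨!![p.2 - p.1 0 - p.1 1, p.1 0; p.1 1, -(p.2 - p.1 0 - p.1 1)],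
    by simp [Matrix.trace_fin_two]⟩
  left_inv := by
    rintro ⟨A, hA⟩
    have h00 : invariantForm A - A 0 1 - A 1 0 = A 0 0 := by
      rw [invariantForm_apply]
      ring
    apply Subtype.ext
    change !![invariantForm A - A 0 1 - A 1 0, A 0 1;
      A 1 0, -(invariantForm A - A 0 1 - A 1 0)] = A
    rw [h00, ← apply_one_one_eq_neg_of_trace_eq_zero hA, ← Matrix.eta_fin_two]
  right_inv p := by
    ext i
    · fin_cases i <;> rfl
    · change p.2 - p.1 0 - p.1 1 + p.1 0 + p.1 1 = p.2
      ring

end Traceless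

section Conjugation

variable {A : Matrix (Fin 2) (Fin 2) F2} (C : GL (Fin 2) F2)

lemma offDiag_conj (hA : A.trace = 0) :
    offDiag (C.1 * A * C⁻¹.1) = C.1 *ᵥ offDiag A := by
  have hinv : C⁻¹.1 = C.1.adjugate := by
    rw [Matrix.coe_units_inv, Matrix.inv_def, GL_det_eq_one, Ring.inverse_one, one_smul]
  have hfrob : C.1.map (· ^ 2) = C.1 := Matrix.ext fun i j ↦ ZMod.pow_card (C.1 i j)
  rw [hinv, offDiag_mul_mul_adjugate C.1 hA, hfrob]

lemma invariantForm_eq_det_add_ite (hA : A.trace = 0) :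
    invariantForm A = A.det + if offDiag A = 0 then 0 else 1 := by
  have hentries : ∀ a b c : F2,
      a + b + c = a * a - b * c + if b = 0 ∧ c = 0 then 0 else 1 := by decide
  simpa [Matrix.det_fin_two, apply_one_one_eq_neg_of_trace_eq_zero hA, CharTwo.neg_eq]
    using hentries (A 0 0) (A 0 1) (A 1 0)

lemma invariantForm_conj (hA : A.trace = 0) :
    invariantForm (C.1 * A * C⁻¹.1) = invariantForm A := by
  have hA' : (C.1 * A * C⁻¹.1).trace = 0 := (trace_conj_GL C A).trans hA
  have hzero : C.1 *ᵥ offDiag A = 0 ↔ offDiag A = 0 :=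
    (Matrix.mulVec_injective_of_isUnit C.isUnit).eq_iff' (Matrix.mulVec_zero _)
  simp only [invariantForm_eq_det_add_ite hA', invariantForm_eq_det_add_ite hA,
    Matrix.det_units_conj, offDiag_conj C hA, hzero]

end Conjugation

namespace Gtilde

/-- The action of `G̃` on the plane `𝔽₂²` by affine transformations: `(A, C)` acts with linear part
`C` and translation part `offDiag A`. -/
def affineHom : Gtilde →* Equiv.Perm (Fin 2 → F2) :=
  MonoidHom.toHomPerm
    { toFun g v := g.1.right.1 *ᵥ v + offDiag g.1.left.toAdd
      map_one' := by
        funext v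
        change (1 : Matrix (Fin 2) (Fin 2) F2) *ᵥ v + offDiag 0 = v
        rw [Matrix.one_mulVec, map_zero, add_zero]
      map_mul' g h := by
        funext v
        change (g.1.right.1 * h.1.right.1) *ᵥ v + offDiag (g.1.left.toAdd +
            g.1.right.1 * h.1.left.toAdd * g.1.right⁻¹.1) =
          g.1.right.1 *ᵥ (h.1.right.1 *ᵥ v + offDiag h.1.left.toAdd) + offDiag g.1.left.toAdd
        rw [map_add, offDiag_conj _ h.2, Matrix.mulVec_add, Matrix.mulVec_mulVec]
        abel }

/-- The character of `G̃` that splits off the central subgroup of pairs `(A, 1)` with `A` scalar. -/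
def character : Gtilde →* Multiplicative F2 where
  toFun g := Multiplicative.ofAdd (invariantForm g.1.left.toAdd)
  map_one' := by simp
  map_mul' g h := by
    change Multiplicative.ofAdd (invariantForm (g.1.left.toAdd +
      g.1.right.1 * h.1.left.toAdd * g.1.right⁻¹.1)) = _
    rw [map_add, invariantForm_conj _ h.2, ofAdd_add]

lemma affineHom_prod_character_injective :
    Function.Injective (affineHom.prod character) := by
  rintro ⟨⟨A, C⟩, hA⟩ ⟨⟨B, D⟩, hB⟩ h
  obtain ⟨haff, hchar⟩ := Prod.ext_iff.mp h
  obtain ⟨hCD, hoff⟩ := eq_and_eq_of_forall_mulVec_add_eq fun v ↦ DFunLike.congr_fun haff v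
  have hAB : (⟨A.toAdd, hA⟩ : LinearMap.ker (Matrix.traceLinearMap (Fin 2) F2 F2)) =
      ⟨B.toAdd, hB⟩ := tracelessEquiv.injective (Prod.ext hoff hchar)
  exact Subtype.ext (SemidirectProduct.ext (congrArg Subtype.val hAB) (Units.ext hCD))

/-- The coordinates `(A, C)` on the underlying set of `G̃`. -/
def equivProd :
    Gtilde ≃ LinearMap.ker (Matrix.traceLinearMap (Fin 2) F2 F2) × GL (Fin 2) F2 where
  toFun g := (⟨g.1.left.toAdd, g.2⟩, g.1.right)
  invFun p := ⟨⟨Multiplicative.ofAdd p.1.1, p.2⟩, p.1.2⟩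
  left_inv _ := rfl
  right_inv _ := rfl

lemma card_eq : Nat.card Gtilde = 48 := by
  rw [Nat.card_congr (equivProd.trans (tracelessEquiv.toEquiv.prodCongr (Equiv.refl _))),
    Nat.card_prod, Matrix.card_GL_field]
  simp [Fin.prod_univ_two]

lemma affineHom_prod_character_bijective :
    Function.Bijective (affineHom.prod character) := by
  refine (Nat.bijective_iff_injective_and_card _).mpr ⟨affineHom_prod_character_injective, ?_⟩
  rw [card_eq, Nat.card_prod, Nat.card_perm]
  simp [Nat.factorial]

end Gtilde

/-- The group `G̃` is isomorphic to `S₄ × C₂`. -/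
theorem Gtilde_iso_S4_times_C2 :
    Nonempty (↥Gtilde ≃* Equiv.Perm (Fin 4) × Multiplicative (ZMod 2)) := by
  have points : (Fin 2 → F2) ≃ Fin 4 := Fintype.equivFinOfCardEq (by simp)
  exact ⟨(MulEquiv.ofBijective _ Gtilde.affineHom_prod_character_bijective).trans
    (points.permCongrHom.prodCongr (MulEquiv.refl _))⟩
end

section
/- For every element (A, C) of G̃, the trace of the matrix product A·C equals 1 if and only if the order of (A, C) in G̃ is greater than 3 (equivalently, equal to 4 or 6). -/
open Matrix

/-!
The map `(A, C) ↦ g = (1 + εA)C` embeds `M₂(R) ⋊ GL₂(R)` into `GL₂(R[ε])`, where `ε² = 0`. If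
`tr A = 0` and `det C = 1`, then `det g = 1`, so in characteristic two Cayley–Hamilton reads
`g² = tg + 1` with `t = tr g = tr C + ε tr(AC)`. If `tr C = 0`, then `t² = 0`, so
`g⁴ = t²g² + 1 = 1`, while `g² = 1` only if `t = 0`. If `tr C = 1`, then `t² = 1`, so `g³ = t` and
`g⁶ = 1`, while `g² ≠ 1`, and `g³ = 1` only if `t = 1`.
-/

open DualNumber TrivSqZeroExt

section QuadraticElement

variable {S A : Type*} [CommSemiring S] [Ring A] [Algebra S A] {g : A} {t : S}

lemma isUnit_of_sq_eq_smul_add_one (hg : g ^ 2 = t • g + 1) : IsUnit g := by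
  have hgt : g * (g - algebraMap S A t) = 1 := by
    rw [mul_sub, ← pow_two, hg, ← Algebra.commutes, ← Algebra.smul_def, add_sub_cancel_left]
  have htg : (g - algebraMap S A t) * g = 1 := by
    rw [sub_mul, ← pow_two, hg, ← Algebra.smul_def, add_sub_cancel_left]
  exact ⟨⟨g, _, hgt, htg⟩, rfl⟩

lemma sq_eq_one_iff_of_sq_eq_smul_add_one [FaithfulSMul S A] (hg : g ^ 2 = t • g + 1) :
    g ^ 2 = 1 ↔ t = 0 := by
  rw [hg, add_eq_right, Algebra.smul_def,
    (isUnit_of_sq_eq_smul_add_one hg).mul_left_eq_zero,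
    map_eq_zero_iff _ (FaithfulSMul.algebraMap_injective S A)]

variable [CharP A 2]

lemma pow_four_eq_of_sq_eq_smul_add_one (hg : g ^ 2 = t • g + 1) :
    g ^ 4 = t ^ 2 • g ^ 2 + 1 := by
  calc g ^ 4 = (t • g + 1) ^ 2 := by rw [← hg, ← pow_mul]
    _ = t ^ 2 • g ^ 2 + 1 := by
      rw [(Commute.one_right (t • g)).add_sq, CharTwo.two_eq_zero (R := A), zero_mul, zero_mul,
        add_zero, smul_pow, one_pow]

lemma pow_three_eq_of_sq_eq_smul_add_one (hg : g ^ 2 = t • g + 1) (ht : t ^ 2 = 1) :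
    g ^ 3 = algebraMap S A t := by
  calc g ^ 3
    _ = (t • g + 1) * g := by rw [pow_succ, hg]
    _ = t • g ^ 2 + g := by rw [add_mul, smul_mul_assoc, ← pow_two, one_mul]
    _ = g + t • 1 + g := by rw [hg, smul_add, smul_smul, ← pow_two, ht, one_smul]
    _ = algebraMap S A t := by
      rw [add_right_comm, CharTwo.add_self_eq_zero, zero_add, Algebra.algebraMap_eq_smul_one]

variable [FaithfulSMul S A]

lemma orderOf_eq_four_of_sq_eq_smul_add_one (hg : g ^ 2 = t • g + 1) (ht : t ^ 2 = 0)
    (ht₀ : t ≠ 0) : orderOf g = 4 := by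
  refine orderOf_eq_prime_pow (p := 2) (n := 1) ?_ ?_
  · rwa [pow_one, sq_eq_one_iff_of_sq_eq_smul_add_one hg]
  · simpa [ht] using pow_four_eq_of_sq_eq_smul_add_one hg

lemma orderOf_eq_six_of_sq_eq_smul_add_one (hg : g ^ 2 = t • g + 1) (ht : t ^ 2 = 1)
    (ht₁ : t ≠ 1) : orderOf g = 6 := by
  have hcube := pow_three_eq_of_sq_eq_smul_add_one hg ht
  have hcube_ne : g ^ 3 ≠ 1 := by
    rwa [hcube, ne_eq, FaithfulSMul.algebraMap_eq_one_iff]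
  have hsq_ne : g ^ 2 ≠ 1 := by
    rw [ne_eq, sq_eq_one_iff_of_sq_eq_smul_add_one hg]
    rintro rfl
    exact ht₁ (by rwa [zero_pow two_ne_zero] at ht)
  have hsix : g ^ 6 = 1 := by rw [pow_mul g 3 2, hcube, ← map_pow, ht, map_one]
  refine orderOf_eq_of_pow_and_pow_div_prime (by norm_num) hsix fun p hp hdvd => ?_
  rcases (hp.dvd_mul (m := 2) (n := 3)).mp hdvd with h | h
  · rwa [(Nat.prime_dvd_prime_iff_eq hp Nat.prime_two).mp h]
  · rwa [(Nat.prime_dvd_prime_iff_eq hp Nat.prime_three).mp h]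

lemma orderOf_le_three_of_sq_eq_smul_add_one (hg : g ^ 2 = t • g + 1) (ht : t = 0 ∨ t = 1) :
    orderOf g ≤ 3 := by
  rcases ht with rfl | rfl
  · have hsq : g ^ 2 = 1 := (sq_eq_one_iff_of_sq_eq_smul_add_one hg).mpr rfl
    exact (orderOf_le_of_pow_eq_one two_pos hsq).trans (by norm_num)
  · have hcube : g ^ 3 = 1 := by
      rw [pow_three_eq_of_sq_eq_smul_add_one hg (one_pow 2), map_one]
    exact orderOf_le_of_pow_eq_one three_pos hcube

end QuadraticElement

lemma sq_eq_trace_smul_add_one_of_det_eq_one {S : Type*} [CommRing S] [CharP S 2]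
    {M : Matrix (Fin 2) (Fin 2) S} (hM : M.det = 1) : M ^ 2 = M.trace • M + 1 := by
  have : Nontrivial S := CharP.nontrivial_of_char_ne_one (v := 2) (by norm_num)
  have hCH := M.aeval_self_charpoly
  simp only [charpoly_fin_two, hM, map_add, map_mul, map_pow, Polynomial.aeval_X,
    Polynomial.aeval_C, map_one, CharTwo.sub_eq_add] at hCH
  rw [← Algebra.smul_def, add_assoc] at hCH
  exact CharTwo.add_eq_zero.mp hCH

lemma dualNumber_sq_eq_inl_fst_sq {R : Type*} [CommSemiring R] [CharP R 2] (z : R[ε]) :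
    z ^ 2 = inl (z.fst ^ 2) := by
  ext
  · simp
  · simp [pow_two, mul_comm z.snd, CharTwo.add_self_eq_zero]

lemma dualNumberEquiv_symm_inl_add_inr {R n : Type} [CommSemiring R] [Fintype n] [DecidableEq n]
    (M N : Matrix n n R) :
    dualNumberEquiv.symm (inl M + inr N) = M.map inl + N.map inr := by
  rw [AlgEquiv.symm_apply_eq]
  ext <;> simp

namespace MGL

variable {R : Type} [CommRing R]

/-- The embedding `(A, C) ↦ (1 + εA)C = C + ε(AC)` of `M₂(R) ⋊ GL₂(R)` into the `2×2` matrices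
over the dual numbers `R[ε]`, where orders can be computed by Cayley–Hamilton. -/
def toDualMatrix : MGL R →* Matrix (Fin 2) (Fin 2) R[ε] where
  toFun x := (x.right : Matrix (Fin 2) (Fin 2) R).map inl +
    (Multiplicative.toAdd x.left * x.right).map inr
  map_one' := by simp [Matrix.map_one _ (inl_zero R) (inl_one R)]
  map_mul' x y := by
    simp only [← dualNumberEquiv_symm_inl_add_inr, ← map_mul]
    congr 1
    ext1
    · simp
    · simp [conjHom, conjAut, add_mul, mul_assoc, add_comm]

lemma toDualMatrix_injective : Function.Injective (toDualMatrix (R := R)) := by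
  intro x y hxy
  have hright : x.right = y.right := by
    ext i j
    simpa [toDualMatrix] using congrArg fst (congrFun₂ hxy i j)
  have hleft : Multiplicative.toAdd x.left * x.right = Multiplicative.toAdd y.left * x.right := by
    ext i j
    simpa [toDualMatrix, hright] using congrArg snd (congrFun₂ hxy i j)
  exact SemidirectProduct.ext (x.right.isUnit.mul_left_injective hleft) hright

lemma trace_toDualMatrix (x : MGL R) :
    (toDualMatrix x).trace = inl (x.right : Matrix (Fin 2) (Fin 2) R).trace +
      inr (Multiplicative.toAdd x.left * (x.right : Matrix (Fin 2) (Fin 2) R)).trace := by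
  ext <;> simp [toDualMatrix, trace_fin_two]

lemma det_toDualMatrix (x : MGL R) :
    (toDualMatrix x).det = inl (x.right : Matrix (Fin 2) (Fin 2) R).det +
      inr ((Multiplicative.toAdd x.left).trace * (x.right : Matrix (Fin 2) (Fin 2) R).det) := by
  ext
  · simp [toDualMatrix, det_fin_two]
  · simp [toDualMatrix, det_fin_two, trace_fin_two, mul_apply, Fin.sum_univ_two]
    ring

end MGL

lemma F2_eq_zero_or_one (a : F2) : a = 0 ∨ a = 1 := by
  revert a
  decide

lemma F2_ne_zero_iff_eq_one {a : F2} : a ≠ 0 ↔ a = 1 := by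
  revert a
  decide

lemma GL_F2_det_eq_one {n : Type*} [Fintype n] [DecidableEq n] (C : GL n F2) :
    (C : Matrix n n F2).det = 1 :=
  F2_ne_zero_iff_eq_one.mp ((isUnit_iff_isUnit_det _).mp C.isUnit).ne_zero

theorem trace_mul_eq_one_iff_orderOf_gt_three_general {R : Type} [CommRing R] [CharP R 2]
    (x : MGL R) (hA : (Multiplicative.toAdd x.left).trace = 0)
    (hdet : (x.right : Matrix (Fin 2) (Fin 2) R).det = 1)
    (htr : (x.right : Matrix (Fin 2) (Fin 2) R).trace = 0 ∨
      (x.right : Matrix (Fin 2) (Fin 2) R).trace = 1) :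
    ((Multiplicative.toAdd x.left * (x.right : Matrix (Fin 2) (Fin 2) R)).trace ≠ 0 ↔
      3 < orderOf x) ∧ (3 < orderOf x ↔ orderOf x = 4 ∨ orderOf x = 6) := by
  have : Nontrivial R := CharP.nontrivial_of_char_ne_one (v := 2) (by norm_num)
  have : CharP R[ε] 2 := charP_of_injective_algebraMap inl_injective 2
  rw [← orderOf_injective _ MGL.toDualMatrix_injective x]
  set g := MGL.toDualMatrix x
  have hsq : g ^ 2 = g.trace • g + 1 :=
    sq_eq_trace_smul_add_one_of_det_eq_one (by simp [g, MGL.det_toDualMatrix, hA, hdet])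
  have htrace : g.trace = _ := MGL.trace_toDualMatrix x
  by_cases hτ : (Multiplicative.toAdd x.left * (x.right : Matrix (Fin 2) (Fin 2) R)).trace = 0
  · have hle : orderOf g ≤ 3 := orderOf_le_three_of_sq_eq_smul_add_one (t := g.trace) hsq <|
      htr.imp (fun h => by simp [htrace, hτ, h]) (fun h => by simp [htrace, hτ, h])
    grind
  · have hsq_trace : g.trace ^ 2 = inl ((x.right : Matrix (Fin 2) (Fin 2) R).trace ^ 2) := by
      simp [dualNumber_sq_eq_inl_fst_sq, htrace]
    have htrace_snd : g.trace.snd ≠ 0 := by simpa [htrace] using hτ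
    have hord : orderOf g = 4 ∨ orderOf g = 6 := by
      refine htr.imp (fun h => ?_) (fun h => ?_)
      · exact orderOf_eq_four_of_sq_eq_smul_add_one hsq (by simp [hsq_trace, h])
          (ne_of_apply_ne snd htrace_snd)
      · exact orderOf_eq_six_of_sq_eq_smul_add_one hsq (by simp [hsq_trace, h])
          (ne_of_apply_ne snd htrace_snd)
    grind

/-- For `(A, C) ∈ G̃`, one has `tr (A·C) = 1` iff the order of `(A, C)` in `G̃` is
greater than 3, equivalently equal to 4 or 6. -/
theorem trace_mul_eq_one_iff_orderOf_gt_three (x : ↥Gtilde) :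
    ((Multiplicative.toAdd (x : MGL F2).left *
        ((x : MGL F2).right : Matrix (Fin 2) (Fin 2) F2)).trace = 1 ↔ 3 < orderOf x) ∧
    (3 < orderOf x ↔ orderOf x = 4 ∨ orderOf x = 6) := by
  simpa only [F2_ne_zero_iff_eq_one, Subgroup.orderOf_coe] using
    trace_mul_eq_one_iff_orderOf_gt_three_general (x : MGL F2) x.2 (GL_F2_det_eq_one _)
      (F2_eq_zero_or_one _)
end

section
/- Let ℓ be a prime, α ≥ 1 an integer, G a group, and let ρ₁, ρ₂ : G → GL₂(ℤ_ℓ) be group homomorphisms. Suppose μ : G → M₂(ℤ_ℓ) is a map satisfying ρ₁(σ) = (1 + ℓ^α·μ(σ))·ρ₂(σ) for all σ ∈ G. Then the map σ ↦ (μ(σ) mod ℓ, ρ₂(σ) mod ℓ) is a group homomorphism from G to the semidirect product M₂(𝔽_ℓ) ⋊ GL₂(𝔽_ℓ), where GL₂(𝔽_ℓ) acts on the additive group M₂(𝔽_ℓ) by conjugation, i.e. with group law (A,C)·(B,D) = (A + C B C⁻¹, C D). -/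
open Matrix

/-!
The quotient `ρ₁ ρ₂⁻¹ = 1 + a • μ` of two homomorphisms is a crossed homomorphism for conjugation
by `ρ₂`. Expanding this and cancelling `a` gives
`μ (σ τ) = μ σ + ρ₂ σ μ τ (ρ₂ σ)⁻¹ + a • (μ σ · ρ₂ σ μ τ (ρ₂ σ)⁻¹)`,
whose last term vanishes under any reduction that kills `a`. What remains is the group law of the
semidirect product.
-/

theorem map_mul_mul_inv_map_mul {G H : Type*} [Monoid G] [Group H] (ρ₁ ρ₂ : G →* H) (σ τ : G) :
    ρ₁ (σ * τ) * (ρ₂ (σ * τ))⁻¹ =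
      (ρ₁ σ * (ρ₂ σ)⁻¹) * (ρ₂ σ * (ρ₁ τ * (ρ₂ τ)⁻¹) * (ρ₂ σ)⁻¹) := by
  rw [map_mul, map_mul]
  group

theorem eq_add_add_smul_mul_of_one_add_smul_eq_mul {R A : Type*} [CommSemiring R] [Ring A]
    [Algebra R A] {a : R} (ha : IsSMulRegular A a) {x y z : A}
    (h : 1 + a • z = (1 + a • x) * (1 + a • y)) : z = x + y + a • (x * y) := by
  refine ha (add_left_cancel (a := 1) (h.trans ?_))
  simp only [add_mul, mul_add, one_mul, mul_one, smul_mul_assoc, mul_smul_comm, smul_add]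
  abel

section CrossedHom

variable {G R A : Type*} [Monoid G] [CommSemiring R] [Ring A] [Algebra R A] {a : R}
  {ρ₁ ρ₂ : G →* Aˣ} {μ : G → A}

theorem one_add_smul_map_mul (h : ∀ σ, (ρ₁ σ : A) = (1 + a • μ σ) * ρ₂ σ) (σ τ : G) :
    1 + a • μ (σ * τ) =
      (1 + a • μ σ) * (1 + a • (ρ₂ σ * μ τ * ((ρ₂ σ)⁻¹ : Aˣ))) := by
  have quotient_eq (υ : G) : ((ρ₁ υ * (ρ₂ υ)⁻¹ : Aˣ) : A) = 1 + a • μ υ := by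
    rw [Units.val_mul, h, Units.mul_inv_cancel_right]
  have conj_eq : (ρ₂ σ : A) * (1 + a • μ τ) * ((ρ₂ σ)⁻¹ : Aˣ) =
      1 + a • (ρ₂ σ * μ τ * ((ρ₂ σ)⁻¹ : Aˣ)) := by
    rw [mul_add, add_mul, mul_one, Units.mul_inv, mul_smul_comm, smul_mul_assoc]
  calc
    1 + a • μ (σ * τ) = ((ρ₁ (σ * τ) * (ρ₂ (σ * τ))⁻¹ : Aˣ) : A) := (quotient_eq _).symm
    _ = (1 + a • μ σ) * (ρ₂ σ * (1 + a • μ τ) * ((ρ₂ σ)⁻¹ : Aˣ)) := by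
      rw [map_mul_mul_inv_map_mul, Units.val_mul, Units.val_mul (_ * _), Units.val_mul (ρ₂ σ),
        quotient_eq, quotient_eq]
    _ = _ := by rw [conj_eq]

theorem map_apply_mul_eq_add_conj {B : Type*} [Semiring B] (ha : IsSMulRegular A a) (f : A →+* B)
    (hf : f (algebraMap R A a) = 0) (h : ∀ σ, (ρ₁ σ : A) = (1 + a • μ σ) * ρ₂ σ) (σ τ : G) :
    f (μ (σ * τ)) = f (μ σ) + f (ρ₂ σ) * f (μ τ) * f ((ρ₂ σ)⁻¹ : Aˣ) := by
  rw [eq_add_add_smul_mul_of_one_add_smul_eq_mul ha (one_add_smul_map_mul h σ τ),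
    Algebra.smul_def]
  simp only [map_add, map_mul, hf, zero_mul, add_zero]

end CrossedHom

theorem MGL.mk_mul_mk {R : Type} [CommRing R] (A B : Matrix (Fin 2) (Fin 2) R)
    (C D : GL (Fin 2) R) :
    (⟨Multiplicative.ofAdd A, C⟩ * ⟨Multiplicative.ofAdd B, D⟩ : MGL R) =
      ⟨Multiplicative.ofAdd (A + C * B * (C⁻¹ : GL (Fin 2) R)), C * D⟩ :=
  rfl

theorem reduction_is_group_hom_general {R G : Type*} {S : Type} [CommRing R] [CommRing S]
    [Monoid G] {a : R} (ha : IsLeftRegular a) (f : R →+* S) (hf : f a = 0)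
    (ρ₁ ρ₂ : G →* GL (Fin 2) R) (μ : G → Matrix (Fin 2) (Fin 2) R)
    (h : ∀ σ, (ρ₁ σ : Matrix (Fin 2) (Fin 2) R) = (1 + a • μ σ) * ρ₂ σ) (σ τ : G) :
    (⟨Multiplicative.ofAdd ((μ (σ * τ)).map f),
        Matrix.GeneralLinearGroup.map f (ρ₂ (σ * τ))⟩ : MGL S) =
      ⟨Multiplicative.ofAdd ((μ σ).map f), Matrix.GeneralLinearGroup.map f (ρ₂ σ)⟩ *
        ⟨Multiplicative.ofAdd ((μ τ).map f), Matrix.GeneralLinearGroup.map f (ρ₂ τ)⟩ := by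
  have scalar_eq_zero : f.mapMatrix (algebraMap R (Matrix (Fin 2) (Fin 2) R) a) = 0 := by
    simp [Matrix.algebraMap_eq_diagonal, hf]
  have cocycle := map_apply_mul_eq_add_conj ha.matrix f.mapMatrix scalar_eq_zero h σ τ
  rw [MGL.mk_mul_mk, map_mul ρ₂, map_mul]
  -- By `rfl`, `(map f C)⁻¹` has underlying matrix `C⁻¹.map f`: `Units.map` carries inverses along.
  exact congrArg (fun M ↦ (⟨Multiplicative.ofAdd M, _⟩ : MGL S)) cocycle

/-- Given `ρ₁, ρ₂ : G → GL₂(ℤ_ℓ)` and `μ : G → M₂(ℤ_ℓ)` with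
`ρ₁(σ) = (1 + ℓ^α·μ(σ))·ρ₂(σ)` for all `σ`, the map
`σ ↦ (μ(σ) mod ℓ, ρ₂(σ) mod ℓ)` is a homomorphism from `G` to the semidirect
product `M₂(𝔽_ℓ) ⋊ GL₂(𝔽_ℓ)` (with `GL₂(𝔽_ℓ)` acting by conjugation). -/
theorem reduction_is_group_hom (ℓ : ℕ) [Fact ℓ.Prime] (α : ℕ) (hα : 1 ≤ α)
    (G : Type) [Group G] (ρ₁ ρ₂ : G →* GL (Fin 2) ℤ_[ℓ])
    (μ : G → Matrix (Fin 2) (Fin 2) ℤ_[ℓ])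
    (h : ∀ σ : G, (ρ₁ σ : Matrix (Fin 2) (Fin 2) ℤ_[ℓ]) =
      (1 + (ℓ : ℤ_[ℓ]) ^ α • μ σ) * (ρ₂ σ : Matrix (Fin 2) (Fin 2) ℤ_[ℓ])) :
    ∀ σ τ : G,
      (⟨Multiplicative.ofAdd ((μ (σ * τ)).map PadicInt.toZMod),
          Matrix.GeneralLinearGroup.map PadicInt.toZMod (ρ₂ (σ * τ))⟩ : MGL (ZMod ℓ)) =
      (⟨Multiplicative.ofAdd ((μ σ).map PadicInt.toZMod),
          Matrix.GeneralLinearGroup.map PadicInt.toZMod (ρ₂ σ)⟩ : MGL (ZMod ℓ)) *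
      (⟨Multiplicative.ofAdd ((μ τ).map PadicInt.toZMod),
          Matrix.GeneralLinearGroup.map PadicInt.toZMod (ρ₂ τ)⟩ : MGL (ZMod ℓ)) :=
  reduction_is_group_hom_general (IsRegular.of_ne_zero (pow_ne_zero α (NeZero.ne _))).left
    PadicInt.toZMod (by simp [Nat.one_le_iff_ne_zero.mp hα]) ρ₁ ρ₂ μ h
end

section
/- Let H be a subgroup of GL₂(𝔽₂), and consider the action of H on the 𝔽₄-vector space 𝔽₄² obtained by mapping matrix entries into 𝔽₄ via the inclusion 𝔽₂ ⊆ 𝔽₄. Then the only 𝔽₄-subspaces of 𝔽₄² invariant under every element of H are 0 and 𝔽₄² if and only if H = GL₂(𝔽₂). (In other words, the natural two-dimensional mod 2 representation of a subgroup of GL₂(𝔽₂) is absolutely irreducible exactly when the subgroup is all of GL₂(𝔽₂), a group isomorphic to S₃.) -/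
/-!
A proper subgroup `H` of `GL₂(𝔽₂)`, a group of order `6 = 2 * 3`, has order dividing `2` or `3` and
is therefore cyclic. If `K` contains a primitive cube root of unity, every monic quadratic over `𝔽₂`
has a root in `K`, so a generator of `H` has an eigenvector over `K`, and the line it spans is
stable under `H`. Conversely, if `v` lies in a subspace stable under the transvections `1 + E_{ij}`,
so does `E_{ij} v = v_j e_i`; if `v_j ≠ 0`, the subspace thus contains `e_i` for all `i ≠ j`, and
then, applying this to some `e_i` in place of `v`, it contains `e_j` too.
-/

open Matrix Module

theorem isCyclic_of_ne_top_of_card_eq_mul {G : Type*} [Group G] {p q : ℕ} [hp : Fact p.Prime]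
    [hq : Fact q.Prime] (hG : Nat.card G = p * q) {H : Subgroup G} (hH : H ≠ ⊤) : IsCyclic H := by
  have : Finite G :=
    Nat.finite_of_card_ne_zero (hG ▸ mul_ne_zero hp.out.ne_zero hq.out.ne_zero)
  obtain ⟨a, b, ha, hb, hab⟩ := Nat.dvd_mul.mp (hG ▸ H.card_subgroup_dvd_card)
  rcases (Nat.dvd_prime hp.out).mp ha with rfl | rfl
  · exact isCyclic_of_card_dvd_prime (p := q) (by rwa [← hab, one_mul])
  rcases (Nat.dvd_prime hq.out).mp hb with rfl | rfl
  · exact isCyclic_of_card_dvd_prime (p := a) (by rw [← hab, mul_one])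
  · exact absurd (H.eq_top_of_card_eq (hab.symm.trans hG.symm)) hH

theorem card_GL_fin_two_zmod_two : Nat.card (GL (Fin 2) (ZMod 2)) = 2 * 3 := by
  rw [card_GL_field, ZMod.card, Fin.prod_univ_two]
  norm_num

theorem finrank_eq_one_of_generator_hasEigenvalue {K G V : Type*} [Field K] [Monoid G]
    [AddCommGroup V] [Module K V] {ρ : Representation K G V} {g : G}
    (hg : ∀ x, x ∈ Submonoid.powers g) {μ : K} (hμ : End.HasEigenvalue (ρ g) μ)
    (hρ : ∀ W : Submodule K V, (∀ x, W ∈ End.invtSubmodule (ρ x)) → W = ⊥ ∨ W = ⊤) :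
    finrank K V = 1 := by
  obtain ⟨v, hv⟩ := hμ.exists_hasEigenvector
  have hstable (x : G) : K ∙ v ∈ End.invtSubmodule (ρ x) := by
    obtain ⟨n, rfl⟩ := hg x
    rw [End.mem_invtSubmodule, Submodule.span_singleton_le_iff_mem, Submodule.mem_comap, map_pow,
      hv.pow_apply]
    exact Submodule.smul_mem _ _ (Submodule.mem_span_singleton_self v)
  have hline : K ∙ v = ⊤ :=
    (hρ _ hstable).resolve_left (mt Submodule.span_singleton_eq_bot.mp hv.2)
  rw [← finrank_top, ← hline, finrank_span_singleton hv.2]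

section Eigenvalue

theorem exists_isPrimitiveRoot_card_sub_one (F : Type*) [Field F] [Finite F] :
    ∃ ζ : F, IsPrimitiveRoot ζ (Nat.card F - 1) := by
  obtain ⟨u, hu⟩ := IsCyclic.exists_ofOrder_eq_natCard (α := Fˣ)
  rw [Nat.card_units] at hu
  exact ⟨u, IsPrimitiveRoot.coe_units_iff.mpr (hu ▸ IsPrimitiveRoot.orderOf u)⟩

variable {K : Type*} [Field K] [Algebra (ZMod 2) K] {ω : K}

theorem exists_sq_sub_mul_add_eq_zero (hω : IsPrimitiveRoot ω 3) (t d : ZMod 2) :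
    ∃ μ : K, μ ^ 2 - algebraMap (ZMod 2) K t * μ + algebraMap (ZMod 2) K d = 0 := by
  have : CharP K 2 := charP_of_injective_algebraMap (algebraMap (ZMod 2) K).injective 2
  have hsum : 1 + ω + ω ^ 2 = 0 := by
    simpa [Finset.sum_range_succ] using hω.geom_sum_eq_zero (by norm_num)
  have eq_zero_or_one (x : ZMod 2) : x = 0 ∨ x = 1 := by decide +revert
  rcases eq_zero_or_one d with rfl | rfl
  · exact ⟨0, by simp⟩
  rcases eq_zero_or_one t with rfl | rfl
  · exact ⟨1, by simp [CharTwo.add_self_eq_zero]⟩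
  · refine ⟨ω, ?_⟩
    rw [map_one, one_mul, CharTwo.sub_eq_add]
    linear_combination hsum

theorem exists_hasEigenvalue_toLin'_map (hω : IsPrimitiveRoot ω 3)
    (A : Matrix (Fin 2) (Fin 2) (ZMod 2)) :
    ∃ μ : K, End.HasEigenvalue (toLin' (A.map (algebraMap (ZMod 2) K))) μ := by
  obtain ⟨μ, hμ⟩ := exists_sq_sub_mul_add_eq_zero hω A.trace A.det
  refine ⟨μ, (End.hasEigenvalue_iff_isRoot_charpoly _ μ).mpr ?_⟩
  rw [charpoly_toLin', charpoly_map, charpoly_fin_two]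
  simpa using hμ

end Eigenvalue

section Transvection

variable {n K : Type*} [Fintype n] [DecidableEq n] [Field K]

theorem single_mem_of_transvection_mulVec_mem {W : Submodule K (n → K)} {i j : n} {v : n → K}
    (hv : v ∈ W) (hv' : transvection i j 1 *ᵥ v ∈ W) (hj : v j ≠ 0) : Pi.single i 1 ∈ W := by
  have h : transvection i j 1 *ᵥ v - v = v j • Pi.single i 1 := by
    rw [transvection, add_mulVec, one_mulVec, single_mulVec_eq, one_mul, add_sub_cancel_left]
  exact (W.smul_mem_iff hj).mp (h ▸ W.sub_mem hv' hv)

theorem eq_bot_or_eq_top_of_transvection_mulVec_mem [Nontrivial n] {W : Submodule K (n → K)}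
    (hW : ∀ i j, i ≠ j → ∀ v ∈ W, transvection i j 1 *ᵥ v ∈ W) : W = ⊥ ∨ W = ⊤ := by
  refine or_iff_not_imp_left.mpr fun hbot ↦ ?_
  obtain ⟨v, hv, hv0⟩ := W.ne_bot_iff.mp hbot
  obtain ⟨j, hj⟩ := Function.ne_iff.mp hv0
  have hsingle_of_ne {i : n} (hij : i ≠ j) : Pi.single i 1 ∈ W :=
    single_mem_of_transvection_mulVec_mem hv (hW i j hij v hv) hj
  have hsingle : Pi.single j 1 ∈ W := by
    obtain ⟨i, hij⟩ := exists_ne j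
    exact single_mem_of_transvection_mulVec_mem (hsingle_of_ne hij)
      (hW j i hij.symm _ (hsingle_of_ne hij)) (by simp)
  refine (Submodule.eq_top_iff_forall_basis_mem (Pi.basisFun K n)).mpr fun i ↦ ?_
  rw [Pi.basisFun_apply]
  rcases eq_or_ne i j with rfl | hij
  exacts [hsingle, hsingle_of_ne hij]

theorem eq_bot_or_eq_top_of_GL_map_mulVec_mem [Nontrivial n] {R : Type*} [CommRing R] [Algebra R K]
    {W : Submodule K (n → K)}
    (hW : ∀ C : GL n R, ∀ v ∈ W, C.val.map (algebraMap R K) *ᵥ v ∈ W) : W = ⊥ ∨ W = ⊤ := by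
  refine eq_bot_or_eq_top_of_transvection_mulVec_mem fun i j hij v hv ↦ ?_
  have hmap : (transvection i j (1 : R)).map (algebraMap R K) = transvection i j 1 := by
    simp [transvection, Matrix.map_add]
  exact hmap ▸ hW (SpecialLinearGroup.toGL (SpecialLinearGroup.transvection hij 1)) v hv

end Transvection

/-- The natural representation of a group `H` of invertible matrices over `R`, after extension of
scalars to `K`: it acts on column vectors over `K` through the images of the matrix entries. -/
noncomputable def extendedNaturalRepresentation {n R : Type*} (K : Type*) [Fintype n]
    [DecidableEq n] [CommRing R] [CommRing K] [Algebra R K] (H : Subgroup (GL n R)) :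
    Representation K H (n → K) :=
  (toLinAlgEquiv' : Matrix n n K ≃ₐ[K] _).toMonoidHom.comp <|
    (algebraMap R K).mapMatrix.toMonoidHom.comp <| (Units.coeHom _).comp H.subtype

theorem absolutely_irreducible_iff_top_general {K : Type*} [Field K] [Algebra (ZMod 2) K] {ω : K}
    (hω : IsPrimitiveRoot ω 3) (H : Subgroup (GL (Fin 2) (ZMod 2))) :
    (∀ W : Submodule K (Fin 2 → K),
      (∀ C ∈ H, ∀ v ∈ W, C.val.map (algebraMap (ZMod 2) K) *ᵥ v ∈ W) → W = ⊥ ∨ W = ⊤) ↔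
      H = ⊤ := by
  refine ⟨fun hirr ↦ ?_, ?_⟩
  · by_contra hH
    have := isCyclic_of_ne_top_of_card_eq_mul card_GL_fin_two_zmod_two hH
    obtain ⟨g, hg⟩ := IsCyclic.exists_monoid_generator (α := H)
    obtain ⟨μ, hμ⟩ := exists_hasEigenvalue_toLin'_map hω g.val.val
    have hfinrank : finrank K (Fin 2 → K) = 1 :=
      finrank_eq_one_of_generator_hasEigenvalue (ρ := extendedNaturalRepresentation K H) hg hμ
        fun W hW ↦ hirr W fun C hC v hv ↦ hW ⟨C, hC⟩ hv
    simp at hfinrank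
  · rintro rfl W hW
    exact eq_bot_or_eq_top_of_GL_map_mulVec_mem fun C ↦ hW C trivial

/-- The natural two-dimensional representation of a subgroup `H ≤ GL₂(𝔽₂)` on `𝔽₄²`
(via the inclusion `𝔽₂ ⊆ 𝔽₄`) has no nontrivial invariant `𝔽₄`-subspace if and only
if `H` is all of `GL₂(𝔽₂)` (a group isomorphic to `S₃`). -/
theorem absolutely_irreducible_iff_top (H : Subgroup (GL (Fin 2) (ZMod 2))) :
    (∀ W : Submodule (GaloisField 2 2) (Fin 2 → GaloisField 2 2),
      (∀ C ∈ H, ∀ v ∈ W,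
        Matrix.mulVec
          ((C : Matrix (Fin 2) (Fin 2) (ZMod 2)).map
            (algebraMap (ZMod 2) (GaloisField 2 2))) v ∈ W) →
      W = ⊥ ∨ W = ⊤) ↔ H = ⊤ := by
  obtain ⟨ω, hω⟩ := exists_isPrimitiveRoot_card_sub_one (GaloisField 2 2)
  rw [GaloisField.card 2 2 two_ne_zero] at hω
  exact absolutely_irreducible_iff_top_general hω H
end

section
/- Let t ∈ ℂ and let F(x,y,z) = x(x−z)(y−z) + t·y·z·(x−y), the cubic pencil defining Beauville's modular elliptic surface S₁(5) of level 5. The projective plane cubic F = 0 has a singular point, i.e. there exists (x, y, z) ≠ (0, 0, 0) in ℂ³ at which all three partial derivatives of F vanish, if and only if t·(t² − 11t − 1) = 0, i.e. if and only if t = 0 or t = (11 ± 5√5)/2. -/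
open MvPolynomial

/-!
Let `(x, y, z)` be a singular point of `F = x(x − z)(y − z) + tyz(x − y)` with `t ≠ 0`.
Then `z ≠ 0`, and Euler's identity puts the point on the cubic, so that the identities

* `y F_y − F = z (x(x − z) − ty²)`,
* `x F_x + y F_y − 2F = x (xy − z²)`

give `x(x − z) = ty²` and `xy = z²`. Subtracting the first from `F_y = 0` leaves the conic
`xz = 2yz − y²`, which meets `xy = z²` where `(y − z)(y² − yz − z²) = 0`. Only the second factor
can vanish, so the point is `(y − z : y : z)` with `y / z` a root of `Y² = Y + 1`, and
`x(x − z) = ty²` becomes `t = 8 − 5 y / z`. These values of `t` are the roots of `t² − 11t − 1`.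
-/

section SingularPoint

variable {σ R : Type*} [CommSemiring R]

/-- A singular point of the hypersurface `F = 0` in projective space, given by homogeneous
coordinates. Only the partial derivatives are required to vanish; for `F` homogeneous of degree
invertible in `R`, Euler's identity then gives the vanishing of `F` itself. -/
def IsSingularPoint (F : MvPolynomial σ R) (v : σ → R) : Prop :=
  v ≠ 0 ∧ ∀ i, eval v (pderiv i F) = 0

theorem IsSingularPoint.eval_eq_zero [NoZeroDivisors R] [Finite σ] {F : MvPolynomial σ R}
    {v : σ → R} {n : ℕ} (hv : IsSingularPoint F v) (hF : F.IsHomogeneous n) (hn : (n : R) ≠ 0) :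
    eval v F = 0 := by
  have := Fintype.ofFinite σ
  have euler := congrArg (eval v) hF.sum_X_mul_pderiv
  simp only [map_sum, map_mul, hv.2, mul_zero, Finset.sum_const_zero, nsmul_eq_mul,
    map_natCast] at euler
  exact (mul_eq_zero.mp euler.symm).resolve_left hn

end SingularPoint

section BeauvilleCubic

variable {R : Type*} [CommRing R]

/-- The member `x(x − z)(y − z) + t·y·z·(x − y)` of Beauville's pencil of cubics, in the variables
`x = X 0`, `y = X 1`, `z = X 2`. -/
noncomputable def beauvilleCubic (t : R) : MvPolynomial (Fin 3) R :=
  X 0 * (X 0 - X 2) * (X 1 - X 2) + C t * X 1 * X 2 * (X 0 - X 1)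

theorem isHomogeneous_beauvilleCubic (t : R) : (beauvilleCubic t).IsHomogeneous 3 := by
  have hX (i : Fin 3) : (X i : MvPolynomial (Fin 3) R).IsHomogeneous 1 := isHomogeneous_X R i
  exact (((hX 0).mul ((hX 0).sub (hX 2))).mul ((hX 1).sub (hX 2))).add
    ((((hX 1).C_mul t).mul (hX 2)).mul ((hX 0).sub (hX 1)))

theorem eval_beauvilleCubic (t : R) (v : Fin 3 → R) :
    eval v (beauvilleCubic t) =
      v 0 * (v 0 - v 2) * (v 1 - v 2) + t * v 1 * v 2 * (v 0 - v 1) := by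
  simp [beauvilleCubic]

theorem eval_pderiv_beauvilleCubic (t : R) (v : Fin 3 → R) (i : Fin 3) :
    eval v (pderiv i (beauvilleCubic t)) =
      ![(2 * v 0 - v 2) * (v 1 - v 2) + t * v 1 * v 2,
        v 0 * (v 0 - v 2) + t * v 2 * (v 0 - 2 * v 1),
        v 0 * (2 * v 2 - v 0 - v 1) + t * v 1 * (v 0 - v 1)] i := by
  fin_cases i <;> simp [beauvilleCubic, pderiv_X] <;> ring

theorem isSingularPoint_beauvilleCubic_iff {t : R} {v : Fin 3 → R} :
    IsSingularPoint (beauvilleCubic t) v ↔ v ≠ 0 ∧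
      (2 * v 0 - v 2) * (v 1 - v 2) + t * v 1 * v 2 = 0 ∧
      v 0 * (v 0 - v 2) + t * v 2 * (v 0 - 2 * v 1) = 0 ∧
      v 0 * (2 * v 2 - v 0 - v 1) + t * v 1 * (v 0 - v 1) = 0 := by
  simp [IsSingularPoint, eval_pderiv_beauvilleCubic, Fin.forall_fin_succ]

theorem isSingularPoint_beauvilleCubic_zero [Nontrivial R] :
    IsSingularPoint (beauvilleCubic (0 : R)) ![0, 1, 0] :=
  isSingularPoint_beauvilleCubic_iff.mpr ⟨fun h => by simpa using congrFun h 1, by simp⟩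

variable [IsDomain R] {t : R}

theorem isSingularPoint_beauvilleCubic_of_golden {y z : R} (hz : z ≠ 0)
    (golden : y ^ 2 = y * z + z ^ 2) (ht : t * z = 8 * z - 5 * y) :
    IsSingularPoint (beauvilleCubic t) ![y - z, y, z] := by
  refine isSingularPoint_beauvilleCubic_iff.mpr ⟨fun h => hz (congrFun h 2), ?_⟩
  simp only [Matrix.cons_val]
  refine ⟨?_, ?_, mul_left_cancel₀ hz ?_⟩
  · linear_combination y * ht - 3 * golden
  · linear_combination (-y - z) * ht + 6 * golden
  · linear_combination -y * z * ht + 3 * z * golden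

namespace IsSingularPoint

variable {v : Fin 3 → R}

theorem beauvilleCubic_z_ne_zero (hv : IsSingularPoint (beauvilleCubic t) v) (ht : t ≠ 0) :
    v 2 ≠ 0 := by
  obtain ⟨hne, -, hFy, hFz⟩ := isSingularPoint_beauvilleCubic_iff.mp hv
  intro hz
  have hx : v 0 = 0 := by simpa [hz] using hFy
  have hy : v 1 = 0 := by simpa [hx, ht] using hFz
  exact hne (funext (Fin.forall_fin_succ.mpr ⟨hx, by simp [Fin.forall_fin_succ, hy, hz]⟩))

theorem beauvilleCubic_conics (hv : IsSingularPoint (beauvilleCubic t) v) (ht : t ≠ 0)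
    (h3 : (3 : R) ≠ 0) :
    v 0 * (v 0 - v 2) = t * v 1 ^ 2 ∧ v 0 * v 2 = 2 * v 1 * v 2 - v 1 ^ 2 ∧
      v 0 * v 1 = v 2 ^ 2 := by
  have hz := hv.beauvilleCubic_z_ne_zero ht
  have hF := hv.eval_eq_zero (isHomogeneous_beauvilleCubic t) (mod_cast h3)
  rw [eval_beauvilleCubic] at hF
  obtain ⟨-, hFx, hFy, -⟩ := isSingularPoint_beauvilleCubic_iff.mp hv
  have hxt : v 0 * (v 0 - v 2) = t * v 1 ^ 2 :=
    mul_left_cancel₀ hz (by linear_combination v 1 * hFy - hF)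
  refine ⟨hxt, mul_left_cancel₀ ht (by linear_combination hFy - hxt), ?_⟩
  have hx : v 0 ≠ 0 := by
    intro hx
    have hy : v 1 = 0 := by simpa [hx, ht] using hxt.symm
    simp [hx, hy, hz] at hFx
  exact mul_left_cancel₀ hx (by linear_combination v 0 * hFx + v 1 * hFy - 2 * hF)

theorem beauvilleCubic_golden (hv : IsSingularPoint (beauvilleCubic t) v) (ht : t ≠ 0)
    (h3 : (3 : R) ≠ 0) :
    v 1 ^ 2 = v 1 * v 2 + v 2 ^ 2 ∧ t * v 2 = 8 * v 2 - 5 * v 1 := by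
  have hz := hv.beauvilleCubic_z_ne_zero ht
  obtain ⟨hxt, conic, hyperbola⟩ := hv.beauvilleCubic_conics ht h3
  have hy : v 1 ≠ 0 := by
    intro hy
    exact pow_ne_zero 2 hz (by rw [← hyperbola, hy, mul_zero])
  have hyz : v 1 - v 2 ≠ 0 := by
    intro hyz
    have hxz : v 0 - v 2 = 0 :=
      mul_left_cancel₀ hz (by linear_combination conic - (v 1 - v 2) * hyz)
    simp [hxz, ht, hy] at hxt
  have golden : v 1 ^ 2 = v 1 * v 2 + v 2 ^ 2 :=
    mul_left_cancel₀ hyz (by linear_combination v 1 * conic - v 2 * hyperbola)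
  have hx : v 0 = v 1 - v 2 :=
    mul_left_cancel₀ hy (by linear_combination hyperbola - golden)
  rw [hx] at hxt
  refine ⟨golden, mul_left_cancel₀ (pow_ne_zero 2 hy) ?_⟩
  linear_combination -v 2 * hxt + (5 * v 1 - 2 * v 2) * golden

end IsSingularPoint

theorem exists_golden_iff :
    (∃ y z : R, z ≠ 0 ∧ y ^ 2 = y * z + z ^ 2 ∧ t * z = 8 * z - 5 * y) ↔
      t ^ 2 - 11 * t - 1 = 0 := by
  constructor
  · rintro ⟨y, z, hz, golden, ht⟩
    have h : z ^ 2 * (t ^ 2 - 11 * t - 1) = 0 := by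
      linear_combination (t * z - 3 * z - 5 * y) * ht + 25 * golden
    exact (mul_eq_zero.mp h).resolve_left (pow_ne_zero 2 hz)
  · intro h
    by_cases h5 : (5 : R) = 0
    · -- In characteristic 5 the generic choice `(y, z) = (8 - t, 5)` degenerates to `(0, 0)`.
      have ht : t = 3 := by
        have hsq : (t - 3) ^ 2 = 0 := by linear_combination h + (t + 2) * h5
        exact sub_eq_zero.mp (pow_eq_zero_iff two_ne_zero |>.mp hsq)
      refine ⟨3, 1, one_ne_zero, ?_, ?_⟩
      · linear_combination h5
      · linear_combination ht + 2 * h5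
    · exact ⟨8 - t, 5, h5, by linear_combination h, by ring⟩

theorem exists_isSingularPoint_beauvilleCubic_iff (h3 : (3 : R) ≠ 0) :
    (∃ v, IsSingularPoint (beauvilleCubic t) v) ↔ t * (t ^ 2 - 11 * t - 1) = 0 := by
  rcases eq_or_ne t 0 with rfl | ht
  · simpa using ⟨_, isSingularPoint_beauvilleCubic_zero⟩
  rw [mul_eq_zero, or_iff_right ht, ← exists_golden_iff]
  constructor
  · rintro ⟨v, hv⟩
    exact ⟨v 1, v 2, hv.beauvilleCubic_z_ne_zero ht, hv.beauvilleCubic_golden ht h3⟩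
  · rintro ⟨y, z, hz, golden, hyz⟩
    exact ⟨_, isSingularPoint_beauvilleCubic_of_golden hz golden hyz⟩

end BeauvilleCubic

theorem beauville_S15_pencil_singular_iff_general {K : Type*} [Field K] [NeZero (2 : K)]
    [NeZero (3 : K)] {s : K} (hs : s ^ 2 = 5) (t : K) :
    ((∃ v, IsSingularPoint (beauvilleCubic t) v) ↔ t * (t ^ 2 - 11 * t - 1) = 0) ∧
    (t * (t ^ 2 - 11 * t - 1) = 0 ↔
      t = 0 ∨ t = (11 + 5 * s) / 2 ∨ t = (11 - 5 * s) / 2) := by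
  refine ⟨exists_isSingularPoint_beauvilleCubic_iff (NeZero.ne 3), ?_⟩
  have hdiscrim : discrim (1 : K) (-11) (-1) = (5 * s) * (5 * s) := by
    rw [discrim]
    linear_combination -25 * hs
  have hquadratic : t ^ 2 - 11 * t - 1 = 1 * (t * t) + -11 * t + -1 := by ring
  rw [mul_eq_zero, hquadratic, quadratic_eq_zero_iff one_ne_zero hdiscrim, neg_neg, mul_one 2]

/-- The member of Beauville's pencil `x(x−z)(y−z) + t·y·z·(x−y) = 0` (defining the
modular elliptic surface `S₁(5)`) has a singular point — a nonzero point where all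
three partial derivatives vanish — iff `t·(t² − 11t − 1) = 0`, i.e. iff `t = 0` or
`t = (11 ± 5√5)/2`. -/
theorem beauville_S15_pencil_singular_iff (t : ℂ) :
    ((∃ v : Fin 3 → ℂ, v ≠ 0 ∧ ∀ i : Fin 3,
        eval v (pderiv i
          (X 0 * (X 0 - X 2) * (X 1 - X 2) + C t * X 1 * X 2 * (X 0 - X 1) :
            MvPolynomial (Fin 3) ℂ)) = 0) ↔
      t * (t ^ 2 - 11 * t - 1) = 0) ∧
    (t * (t ^ 2 - 11 * t - 1) = 0 ↔
      t = 0 ∨ t = (11 + 5 * Real.sqrt 5) / 2 ∨ t = (11 - 5 * Real.sqrt 5) / 2) :=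
  beauville_S15_pencil_singular_iff_general
    (mod_cast Real.sq_sqrt (by norm_num : (0 : ℝ) ≤ 5)) t
end

section
/- Let d be a squarefree integer with d ≠ 0 and d ≠ 1, and let K = ℚ(√d) be the quadratic number field obtained by adjoining a square root of d to ℚ. Then every prime number dividing the discriminant of K lies in {2, 3} (equivalently, K is unramified at every prime p ∉ {2, 3}) if and only if d ∈ {−1, 2, −2, 3, −3, 6, −6}. -/
/-!
Write `D` for the discriminant of `K`. The order `ℤ[√d]` has discriminant `4 * d`, so
`4 * d = c ^ 2 * D` where `c` is, up to sign, its index in `𝓞 K`. Since `d` is squarefree, an odd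
prime dividing `d` cannot divide `c` and hence divides `D`; thus `D` and `d` have the same odd prime
divisors, and for even `n` the primes dividing `D` all divide `n` exactly when `d ∣ n`. Here
`n = 6`.
-/

open NumberField Polynomial

theorem dvd_of_squarefree_of_forall_prime_dvd {M : Type*} [CommMonoidWithZero M]
    [UniqueFactorizationMonoid M] {a b : M} (ha : Squarefree a)
    (h : ∀ p, Prime p → p ∣ a → p ∣ b) : a ∣ b := by
  induction a using UniqueFactorizationMonoid.induction_on_prime with
  | h₁ => exact (ha 0 (by simp)).dvd
  | h₂ u hu => exact hu.dvd
  | h₃ a p _ hp ih =>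
    exact (IsRelPrime.of_squarefree_mul ha).mul_dvd (h p hp (dvd_mul_right p a))
      (ih ha.of_mul_right fun q hq hqa ↦ h q hq (hqa.mul_left p))

theorem prime_dvd_iff_of_sq_mul_eq_sq_mul {M : Type*} [CommMonoidWithZero M]
    [IsCancelMulZero M] [DecompositionMonoid M] {a b c d p : M} (h : a ^ 2 * b = c ^ 2 * d)
    (hb : Squarefree b) (hp : Prime p) (hpa : ¬p ∣ a) :
    p ∣ d ↔ p ∣ b := by
  have hpa2 : ¬p ∣ a ^ 2 := fun hdvd ↦ hpa (hp.dvd_of_dvd_pow hdvd)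
  constructor
  · intro hpd
    exact (hp.dvd_or_dvd (h ▸ hpd.mul_left (c ^ 2))).resolve_left hpa2
  · intro hpb
    by_contra hpd
    have hpc : p ∣ c :=
      hp.dvd_of_dvd_pow ((hp.dvd_or_dvd (h ▸ hpb.mul_left (a ^ 2))).resolve_right hpd)
    have hp_sq : p * p ∣ a ^ 2 * b := by
      rw [h, sq c]
      exact (mul_dvd_mul hpc hpc).mul_right d
    exact hpa2 (hb.dvd_of_squarefree_of_mul_dvd_mul_left hp_sq)

theorem not_isSquare_of_squarefree_of_ne_one {d : ℤ} (hd : Squarefree d) (h1 : d ≠ 1) :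
    ¬IsSquare d := by
  rintro ⟨r, rfl⟩
  exact h1 (Int.isUnit_mul_self (hd r dvd_rfl))

theorem int_dvd_six_iff {d : ℤ} :
    d ∣ 6 ↔ d ∈ ({1, -1, 2, -2, 3, -3, 6, -6} : Set ℤ) := by
  constructor
  · intro hd
    have hle : d ≤ 6 := Int.le_of_dvd (by norm_num) hd
    have hge : -d ≤ 6 := Int.le_of_dvd (by norm_num) (neg_dvd.2 hd)
    have hlow : -6 ≤ d := by omega
    interval_cases d <;> revert hd <;> simp
  · rintro (rfl | rfl | rfl | rfl | rfl | rfl | rfl | rfl) <;> decide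

theorem trace_eq_zero_of_irreducible_X_pow_sub_C {F L : Type*} [Field F] [Field L] [Algebra F L]
    [FiniteDimensional F L] {n : ℕ} (hn : 1 < n) {a : F} (ha : Irreducible (X ^ n - C a))
    {x : L} (hx : x ^ n = algebraMap F L a) : Algebra.trace F L x = 0 := by
  have hmin : minpoly F x = X ^ n - C a :=
    (minpoly.eq_of_irreducible_of_monic ha (by simp [hx])
      (monic_X_pow_sub_C a (by omega))).symm
  have hnext : (X ^ n - C a).nextCoeff = 0 := by
    rw [nextCoeff_of_natDegree_pos (by rw [natDegree_X_pow_sub_C]; omega), natDegree_X_pow_sub_C,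
      coeff_sub, coeff_X_pow, coeff_C, if_neg (by omega), if_neg (by omega), sub_zero]
  rw [trace_eq_finrank_mul_minpoly_nextCoeff, hmin, hnext, neg_zero, mul_zero]

theorem discr_one_left_of_finrank_eq_two {R S : Type*} [CommRing R] [StrongRankCondition R]
    [CommRing S] [Algebra R S] [Module.Free R S] (hS : Module.finrank R S = 2) (y : S) :
    Algebra.discr R ![1, y] = 2 * Algebra.trace R S (y ^ 2) - Algebra.trace R S y ^ 2 := by
  have hone : Algebra.trace R S 1 = 2 := by
    simpa [hS] using Algebra.trace_algebraMap (R := R) (S := S) 1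
  simp [Algebra.discr_def, Matrix.det_fin_two, Algebra.traceMatrix_apply,
    Algebra.traceForm_apply, hone, sq]

theorem discr_eq_sq_det_toMatrix_mul_discr {R S ι : Type*} [CommRing R] [CommRing S] [Algebra R S]
    [Fintype ι] [DecidableEq ι] (b : Module.Basis ι R S) (v : ι → S) :
    Algebra.discr R v = (b.toMatrix v).det ^ 2 * Algebra.discr R b := by
  rw [← Algebra.discr_of_matrix_vecMul, b.toMatrix_map_vecMul]

section Discriminant

variable {K : Type*} [Field K] [NumberField K]

theorem exists_discr_eq_sq_mul_discr {ι : Type*} [Fintype ι] [DecidableEq ι]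
    (hι : Fintype.card ι = Module.finrank ℚ K) (v : ι → 𝓞 K) :
    ∃ c : ℤ, Algebra.discr ℤ v = c ^ 2 * discr K := by
  let b : Module.Basis ι ℤ (𝓞 K) := (RingOfIntegers.basis K).reindex <|
    Fintype.equivOfCardEq <| by
      rw [← Module.finrank_eq_card_chooseBasisIndex, RingOfIntegers.rank, hι]
  exact ⟨(b.toMatrix v).det, discr_eq_discr K b ▸ discr_eq_sq_det_toMatrix_mul_discr b v⟩

variable {d : ℤ} {x : K}

theorem discr_one_sqrt_eq_four_mul (hK : Module.finrank ℚ K = 2) (hd : ¬IsSquare d)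
    {y : 𝓞 K} (hy : y ^ 2 = (d : 𝓞 K)) : Algebra.discr ℤ ![1, y] = 4 * d := by
  have hrank : Module.finrank ℤ (𝓞 K) = 2 := by rw [RingOfIntegers.rank, hK]
  have hirr : Irreducible (X ^ 2 - C (d : ℚ)) :=
    X_pow_sub_C_irreducible_of_prime Nat.prime_two fun q hq ↦
      hd (Rat.isSquare_intCast_iff.1 ⟨q, by rw [← hq, sq]⟩)
  have htrace : Algebra.trace ℤ (𝓞 K) y = 0 := by
    have h : Algebra.trace ℚ K (y : K) = 0 :=
      trace_eq_zero_of_irreducible_X_pow_sub_C one_lt_two hirr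
        (by simpa using congrArg (algebraMap (𝓞 K) K) hy)
    rw [← Algebra.coe_trace_int] at h
    exact_mod_cast h
  have htrace_sq : Algebra.trace ℤ (𝓞 K) (y ^ 2) = 2 * d := by
    simpa [hy, hrank] using Algebra.trace_algebraMap (R := ℤ) (S := 𝓞 K) d
  rw [discr_one_left_of_finrank_eq_two hrank, htrace, htrace_sq]
  ring

theorem exists_four_mul_eq_sq_mul_discr (hK : Module.finrank ℚ K = 2) (hd : ¬IsSquare d)
    (hx : x ^ 2 = (d : K)) : ∃ c : ℤ, 4 * d = c ^ 2 * discr K := by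
  have hint : IsIntegral ℤ x := .of_pow two_pos (hx ▸ isIntegral_algebraMap (x := d))
  obtain ⟨y, rfl⟩ : ∃ y : 𝓞 K, (y : K) = x := ⟨⟨x, hint⟩, rfl⟩
  have hy : y ^ 2 = (d : 𝓞 K) := RingOfIntegers.ext (by simpa using hx)
  rw [← discr_one_sqrt_eq_four_mul hK hd hy]
  exact exists_discr_eq_sq_mul_discr (by simp [hK]) ![1, y]

theorem prime_dvd_discr_iff_of_not_dvd_two (hK : Module.finrank ℚ K = 2) (hd : Squarefree d)
    (h1 : d ≠ 1) (hx : x ^ 2 = (d : K)) {p : ℤ} (hp : Prime p) (hp2 : ¬p ∣ 2) :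
    p ∣ discr K ↔ p ∣ d := by
  obtain ⟨c, hc⟩ :=
    exists_four_mul_eq_sq_mul_discr hK (not_isSquare_of_squarefree_of_ne_one hd h1) hx
  exact prime_dvd_iff_of_sq_mul_eq_sq_mul (a := 2) (c := c) (by linarith) hd hp hp2

theorem forall_prime_dvd_discr_dvd_iff_dvd (hK : Module.finrank ℚ K = 2) (hd : Squarefree d)
    (h1 : d ≠ 1) (hx : x ^ 2 = (d : K)) {n : ℤ} (hn : Even n) :
    (∀ p : ℕ, p.Prime → (p : ℤ) ∣ discr K → (p : ℤ) ∣ n) ↔ d ∣ n := by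
  have hdiscr {p : ℤ} (hp : Prime p) (hp2 : ¬p ∣ 2) : p ∣ discr K ↔ p ∣ d :=
    prime_dvd_discr_iff_of_not_dvd_two hK hd h1 hx hp hp2
  constructor
  · intro h
    refine dvd_of_squarefree_of_forall_prime_dvd hd fun p hp hpd ↦ ?_
    by_cases hp2 : p ∣ 2
    · exact hp2.trans hn.two_dvd
    · exact Int.natAbs_dvd.1 <| h p.natAbs (Int.prime_iff_natAbs_prime.1 hp) <|
        Int.natAbs_dvd.2 ((hdiscr hp hp2).2 hpd)
  · intro hdn p hp hpD
    by_cases hp2 : (p : ℤ) ∣ 2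
    · exact hp2.trans hn.two_dvd
    · exact ((hdiscr (Nat.prime_iff_prime_int.1 hp) hp2).1 hpD).trans hdn

end Discriminant

/-- Let `d` be a squarefree integer, `d ∉ {0, 1}`, and let `K = ℚ(√d)` be the
quadratic number field obtained by adjoining a square root of `d` to `ℚ`. Then every
prime dividing the discriminant of `K` lies in `{2, 3}` (i.e. `K` is unramified
outside `{2, 3}`) iff `d ∈ {−1, 2, −2, 3, −3, 6, −6}`. -/
theorem quadratic_field_unramified_outside_two_three (d : ℤ)
    (hsf : Squarefree d) (h0 : d ≠ 0) (h1 : d ≠ 1)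
    (K : Type) [Field K] [NumberField K] (hK : Module.finrank ℚ K = 2)
    (x : K) (hx : x ^ 2 = (d : K)) :
    (∀ p : ℕ, p.Prime → (p : ℤ) ∣ NumberField.discr K → p ∈ ({2, 3} : Set ℕ)) ↔
      d ∈ ({-1, 2, -2, 3, -3, 6, -6} : Set ℤ) := by
  have hprime (p : ℕ) (hp : p.Prime) : p ∈ ({2, 3} : Set ℕ) ↔ (p : ℤ) ∣ 6 := by
    rw [show (6 : ℤ) = ((2 * 3 : ℕ) : ℤ) by norm_num, Int.natCast_dvd_natCast, hp.dvd_mul,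
      Nat.prime_dvd_prime_iff_eq hp Nat.prime_two, Nat.prime_dvd_prime_iff_eq hp Nat.prime_three]
    rfl
  have hdvd : d ∈ ({-1, 2, -2, 3, -3, 6, -6} : Set ℤ) ↔ d ∣ 6 := by
    simp [int_dvd_six_iff, h1]
  rw [hdvd, ← forall_prime_dvd_discr_dvd_iff_dvd hK hsf h1 hx (by decide)]
  exact forall₃_congr fun p hp _ ↦ hprime p hp
end
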